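/- Every linear identity satisfied by G1 is regular: if t and u are linear terms in the free magma on a type V of variables, and G1 satisfies the identity t ≐ u (for every assignment f : V → G1 the evaluations of t and u under f are equal), then t and u contain exactly the same variables. -/

import Mathlib

/-- The three-element groupoid `G1` from the paper, on `{a,b,c}` encoded as
`{0,1,2}`: a*a=a, a*b=c, a*c=c, b*a=c, b*b=b, b*c=c, c*a=a, c*b=b, c*c=c. -/
def G1 : Type := Fin 3

def g1mul : Fin 3 → Fin 3 → Fin 3 := ![![0, 2, 2], ![2, 1, 2], ![0, 1, 2]]

instance : Mul G1 := ⟨g1mul⟩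

/-- The set of variables occurring in a term of the free magma on `V`. -/
def vars {V : Type*} : FreeMagma V → Set V
  | .of x => {x}
  | .mul t₁ t₂ => vars t₁ ∪ vars t₂

/-- The number of occurrences of a variable `v` in a term. -/
def occCount {V : Type*} [DecidableEq V] (v : V) : FreeMagma V → ℕ
  | .of w => if w = v then 1 else 0
  | .mul t₁ t₂ => occCount v t₁ + occCount v t₂

/-!
The term function of a linear term `t` in a magma depends on every variable of `t`, provided that
the magma is nontrivial, its multiplication is surjective, and its elements are separated both by
left and by right multiplications. Indeed, in a linear product `s * t` the factors have disjoint
variables, so the value of one factor can be fixed at any prescribed element while the variables of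
the other vary freely. Hence two linear terms with the same term function have the same variables,
and `G1` is a magma of this kind.
-/

section Terms

variable {V : Type*}

@[simp]
theorem vars_of (x : V) : vars (FreeMagma.of x) = {x} := rfl

@[simp]
theorem vars_mul (s t : FreeMagma V) : vars (s * t) = vars s ∪ vars t := rfl

variable [DecidableEq V]

@[simp]
theorem occCount_of (v x : V) : occCount v (FreeMagma.of x) = if x = v then 1 else 0 := rfl

@[simp]
theorem occCount_mul (v : V) (s t : FreeMagma V) :
    occCount v (s * t) = occCount v s + occCount v t := rfl

theorem mem_vars_iff_occCount_pos {v : V} {t : FreeMagma V} : v ∈ vars t ↔ 0 < occCount v t := by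
  induction t with
  | ih1 x => simp [Nat.pos_iff_ne_zero, eq_comm]
  | ih2 s t hs ht => simp [hs, ht]

/-- A term is linear if every variable occurs in it at most once. -/
def IsLinearTerm (t : FreeMagma V) : Prop :=
  ∀ v, occCount v t ≤ 1

namespace IsLinearTerm

variable {s t : FreeMagma V}

theorem left (h : IsLinearTerm (s * t)) : IsLinearTerm s :=
  fun v => (Nat.le_add_right _ _).trans (h v)

theorem right (h : IsLinearTerm (s * t)) : IsLinearTerm t :=
  fun v => (Nat.le_add_left _ _).trans (h v)

theorem disjoint_vars (h : IsLinearTerm (s * t)) : Disjoint (vars s) (vars t) := by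
  refine Set.disjoint_left.mpr fun v hs ht => ?_
  have hv := h v
  rw [mem_vars_iff_occCount_pos] at hs ht
  rw [occCount_mul] at hv
  lia

end IsLinearTerm

end Terms

section TermFunctions

variable {V M : Type*} [Mul M]

theorem dependsOn_lift_vars (t : FreeMagma V) :
    DependsOn (fun f : V → M => FreeMagma.lift f t) (vars t) := by
  intro f g hfg
  induction t with
  | ih1 x => exact hfg x rfl
  | ih2 s t hs ht =>
    simp only [map_mul]
    exact congrArg₂ _ (hs fun v hv => hfg v (.inl hv)) (ht fun v hv => hfg v (.inr hv))

open scoped Classical in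
theorem lift_piecewise_mul {s t : FreeMagma V} (hst : Disjoint (vars s) (vars t)) (f g : V → M) :
    FreeMagma.lift ((vars s).piecewise f g) (s * t) =
      FreeMagma.lift f s * FreeMagma.lift g t := by
  have hs : FreeMagma.lift ((vars s).piecewise f g) s = FreeMagma.lift f s :=
    dependsOn_lift_vars s fun _ hv => Set.piecewise_eq_of_mem _ _ _ hv
  have ht : FreeMagma.lift ((vars s).piecewise f g) t = FreeMagma.lift g t :=
    dependsOn_lift_vars t fun _ hv => Set.piecewise_eq_of_notMem _ _ _ (hst.notMem_of_mem_right hv)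
  rw [map_mul, hs, ht]

variable [DecidableEq V]

theorem IsLinearTerm.lift_surjective (hsurj : ∀ c : M, ∃ a b, a * b = c) {t : FreeMagma V}
    (ht : IsLinearTerm t) : Function.Surjective fun f : V → M => FreeMagma.lift f t := by
  induction t with
  | ih1 x => exact fun c => ⟨fun _ => c, rfl⟩
  | ih2 s t ihs iht =>
    intro c
    obtain ⟨a, b, rfl⟩ := hsurj c
    obtain ⟨f, rfl⟩ := ihs ht.left a
    obtain ⟨g, rfl⟩ := iht ht.right b
    exact ⟨_, lift_piecewise_mul ht.disjoint_vars f g⟩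

theorem IsLinearTerm.dependsOn_lift_left (hsurj : ∀ c : M, ∃ a b, a * b = c)
    (hinj : Function.Injective fun a b : M => a * b) {s t : FreeMagma V}
    (hst : IsLinearTerm (s * t)) {A : Set V}
    (hA : DependsOn (fun f : V → M => FreeMagma.lift f (s * t)) A) :
    DependsOn (fun f : V → M => FreeMagma.lift f s) A := by
  classical
  refine fun f g hfg => hinj (funext fun c => ?_)
  obtain ⟨k, rfl⟩ := hst.right.lift_surjective hsurj c
  simp only [← lift_piecewise_mul hst.disjoint_vars]
  exact hA fun v hv => by simp only [Set.piecewise, hfg v hv]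

theorem IsLinearTerm.dependsOn_lift_right (hsurj : ∀ c : M, ∃ a b, a * b = c)
    (hinj : Function.Injective fun a b : M => b * a) {s t : FreeMagma V}
    (hst : IsLinearTerm (s * t)) {A : Set V}
    (hA : DependsOn (fun f : V → M => FreeMagma.lift f (s * t)) A) :
    DependsOn (fun f : V → M => FreeMagma.lift f t) A := by
  classical
  refine fun f g hfg => hinj (funext fun c => ?_)
  obtain ⟨k, rfl⟩ := hst.left.lift_surjective hsurj c
  simp only [← lift_piecewise_mul hst.disjoint_vars]
  exact hA fun v hv => by simp only [Set.piecewise, hfg v hv]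

variable [Nontrivial M]

theorem IsLinearTerm.dependsOn_lift_iff (hsurj : ∀ c : M, ∃ a b, a * b = c)
    (hleft : Function.Injective fun a b : M => a * b)
    (hright : Function.Injective fun a b : M => b * a) {t : FreeMagma V} (ht : IsLinearTerm t)
    {A : Set V} : DependsOn (fun f : V → M => FreeMagma.lift f t) A ↔ vars t ⊆ A := by
  refine ⟨fun hA => ?_, fun h => DependsOn.mono h (dependsOn_lift_vars t)⟩
  induction t with
  | ih1 x =>
    obtain ⟨a, b, hab⟩ := exists_pair_ne M
    refine Set.singleton_subset_iff.mpr (by_contra fun hx => hab ?_)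
    have heq : ∀ v ∈ A, a = Function.update (fun _ => a) x b v := fun v hv => by
      rw [Function.update_of_ne (ne_of_mem_of_not_mem hv hx)]
    simpa using hA heq
  | ih2 s t ihs iht =>
    exact Set.union_subset (ihs ht.left (ht.dependsOn_lift_left hsurj hleft hA))
      (iht ht.right (ht.dependsOn_lift_right hsurj hright hA))

theorem IsLinearTerm.vars_subset_of_lift_eq (hsurj : ∀ c : M, ∃ a b, a * b = c)
    (hleft : Function.Injective fun a b : M => a * b)
    (hright : Function.Injective fun a b : M => b * a) {t u : FreeMagma V} (ht : IsLinearTerm t)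
    (h : ∀ f : V → M, FreeMagma.lift f t = FreeMagma.lift f u) : vars t ⊆ vars u := by
  rw [← ht.dependsOn_lift_iff hsurj hleft hright, funext h]
  exact dependsOn_lift_vars u

theorem stmt_18_general (hsurj : ∀ c : M, ∃ a b, a * b = c)
    (hleft : Function.Injective fun a b : M => a * b)
    (hright : Function.Injective fun a b : M => b * a) {t u : FreeMagma V}
    (ht : IsLinearTerm t) (hu : IsLinearTerm u)
    (h : ∀ f : V → M, FreeMagma.lift f t = FreeMagma.lift f u) : vars t = vars u :=
  (ht.vars_subset_of_lift_eq hsurj hleft hright h).antisymm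
    (hu.vars_subset_of_lift_eq hsurj hleft hright fun f => (h f).symm)

end TermFunctions

namespace G1

instance : DecidableEq G1 := inferInstanceAs (DecidableEq (Fin 3))

instance : Fintype G1 := inferInstanceAs (Fintype (Fin 3))

instance : Nontrivial G1 := inferInstanceAs (Nontrivial (Fin 3))

theorem mul_self : ∀ a : G1, a * a = a := by
  decide

theorem mulLeft_injective : Function.Injective fun a b : G1 => a * b := by
  decide

theorem mulRight_injective : Function.Injective fun a b : G1 => b * a := by
  decide

end G1

/-- Every linear identity satisfied by `G1` is regular: linear terms `t`, `u`
with `t ≐ u` in `G1` contain exactly the same variables. -/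
theorem stmt_18 {V : Type*} [DecidableEq V] (t u : FreeMagma V)
    (hlt : ∀ v : V, occCount v t ≤ 1) (hlu : ∀ v : V, occCount v u ≤ 1)
    (h : ∀ f : V → G1, FreeMagma.lift f t = FreeMagma.lift f u) :
    vars t = vars u :=
  stmt_18_general (fun a => ⟨a, a, G1.mul_self a⟩) G1.mulLeft_injective G1.mulRight_injective
    hlt hlu h
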